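/- Let α∈(0,1/2] and let F satisfy the regular right tail condition (with exponent α). Suppose there is a non-decreasing M∈ℛ_β with β∈[1−2α,1] such that, as x→∞, ω(x)≪x/M(x) and x/M(x)=o(ℓ(x)²). Let g₀(x)=ℓ(x)·√(M(x)/x). Then for every ε∈(0,1/(1+α+β)), every θ>0, and every non-decreasing L∈ℛ with L(x)→∞ and L(x)≪g₀(x)^ε, one has lim_{x→∞} (x/ℓ(x))·∑_{n<L(x)} sup_{t≥θx} F^{*n}((t,t+h]) = 0. -/

import Mathlib

open MeasureTheory Filter Set Real Asymptotics

attribute [local instance] Classical.propDecidable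

noncomputable section

namespace SRT

/-- Convolution of two measures on `ℝ`. -/
def mconv (μ ν : Measure ℝ) : Measure ℝ := μ.bind fun x => ν.map fun y => x + y

/-- `n`-fold self-convolution of `μ`, with the 0-th power the unit mass at `0`. -/
def convPow (μ : Measure ℝ) : ℕ → Measure ℝ
  | 0 => Measure.dirac 0
  | n + 1 => mconv (convPow μ n) μ

/-- The renewal measure `U = ∑ₙ F^{*n}`. -/
def renewal (μ : Measure ℝ) : Measure ℝ := Measure.sum fun n => convPow μ n

/-- Right tail `F̄(x) = μ((x,∞))`. -/
def rtail (μ : Measure ℝ) (x : ℝ) : ℝ := (μ (Set.Ioi x)).toReal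

/-- `f` is strictly positive on `(0,∞)` and regularly varying at `∞` with exponent `β`. -/
def RegVary (f : ℝ → ℝ) (β : ℝ) : Prop :=
  (∀ x > 0, 0 < f x) ∧
    ∀ c > 0, Tendsto (fun x => f (c * x) / f x) atTop (nhds (c ^ β))

/-- `f` is regularly varying at `∞` with some exponent. -/
def RegVaryAny (f : ℝ → ℝ) : Prop := ∃ β : ℝ, RegVary f β

/-- Regular right tail condition: `F̄(x) ∼ 1/ℓ(x)` as `x → ∞`. -/
def RightTail (μ : Measure ℝ) (ℓ : ℝ → ℝ) : Prop :=
  Tendsto (fun x => rtail μ x * ℓ x) atTop (nhds 1)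

/-- Converging tail ratio condition: `F(-x)/F̄(x)` converges to a finite limit. -/
def TailRatio (μ : Measure ℝ) : Prop :=
  ∃ p : ℝ, Tendsto (fun x => (μ (Set.Iic (-x))).toReal / rtail μ x) atTop (nhds p)

/-- `μ` is concentrated on `dℤ`. -/
def ConcOn (μ : Measure ℝ) (d : ℝ) : Prop := μ {x : ℝ | ∃ k : ℤ, x = k * d} = 1

/-- `μ` is arithmetic. -/
def Arith (μ : Measure ℝ) : Prop := ∃ d > 0, ConcOn μ d

/-- `h` is admissible: any positive number if `μ` is non-arithmetic, and
the span of `μ` if `μ` is arithmetic. -/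
def SpanOK (μ : Measure ℝ) (h : ℝ) : Prop :=
  0 < h ∧ (¬ Arith μ ∨ (ConcOn μ h ∧ ∀ d > 0, ConcOn μ d → d ≤ h))

/-- `μ` is concentrated on `a + dℤ`. -/
def ConcOnLat (μ : Measure ℝ) (a d : ℝ) : Prop :=
  μ {x : ℝ | ∃ k : ℤ, x = a + k * d} = 1

/-- `μ` is lattice. -/
def IsLattice (μ : Measure ℝ) : Prop := ∃ a d : ℝ, 0 ≤ a ∧ a < d ∧ ConcOnLat μ a d

/-- `h` is admissible: any positive number if `μ` is non-lattice, and
the span of `μ` if `μ` is lattice. -/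
def LatSpanOK (μ : Measure ℝ) (h : ℝ) : Prop :=
  0 < h ∧ (¬ IsLattice μ ∨
    ((∃ a, 0 ≤ a ∧ a < h ∧ ConcOnLat μ a h) ∧
      ∀ a d : ℝ, 0 ≤ a → a < d → ConcOnLat μ a d → d ≤ h))

/-- Generalized inverse `ℓ⁻(x) = inf {t ≥ 1 : ℓ(t) > x}`. -/
def linv (ℓ : ℝ → ℝ) (x : ℝ) : ℝ := sInf {t : ℝ | 1 ≤ t ∧ x < ℓ t}

/-- `ω(x) = x F((x,x+h]) / F̄(x)`. -/
def omegaFn (μ : Measure ℝ) (h x : ℝ) : ℝ :=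
  x * (μ (Set.Ioc x (x + h))).toReal / rtail μ x

/-- `I_η(x,T) = ∫_{(1-η)x}^x (ω(y)-T)⁺ dy`. -/
def Iof (μ : Measure ℝ) (h η x T : ℝ) : ℝ :=
  ∫ y in (1 - η) * x..x, max (omegaFn μ h y - T) 0

/-- `Î_{η,n,r}(x,T) = ∫_{(1-η)x}^x e^{-(x-y)/(r aₙ)} (ω(y)-T)⁺ dy`. -/
def IofHat (μ : Measure ℝ) (ℓ : ℝ → ℝ) (h η : ℝ) (n : ℕ) (r x T : ℝ) : ℝ :=
  ∫ y in (1 - η) * x..x,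
    Real.exp (-(x - y) / (r * linv ℓ (n : ℝ))) * max (omegaFn μ h y - T) 0

/-- `Sₙ/aₙ` converges in distribution to a law with density `g`. -/
def StableLimit (F : Measure ℝ) (ℓ : ℝ → ℝ) (g : ℝ → ℝ) : Prop :=
  ∀ f : BoundedContinuousFunction ℝ ℝ,
    Tendsto (fun n : ℕ =>
        ∫ x, f x ∂((convPow F n).map fun y => y / linv ℓ (n : ℝ))) atTop
      (nhds (∫ x, f x * g x))

/-- `Sₙ/aₙ` converges in distribution to the law `μζ`. -/
def WeakLimit (F : Measure ℝ) (ℓ : ℝ → ℝ) (μζ : Measure ℝ) : Prop :=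
  ∀ f : BoundedContinuousFunction ℝ ℝ,
    Tendsto (fun n : ℕ =>
        ∫ x, f x ∂((convPow F n).map fun y => y / linv ℓ (n : ℝ))) atTop
      (nhds (∫ x, f x ∂μζ))

/-- The law `μ` is stable: for each `n`, the `n`-fold convolution is the law of
`cₙ X + dₙ` for some `cₙ > 0`, `dₙ`. -/
def IsStable (μ : Measure ℝ) : Prop :=
  ∀ n : ℕ, 0 < n → ∃ c : ℝ, 0 < c ∧ ∃ d : ℝ, convPow μ n = μ.map fun x => c * x + d

/-- The strong renewal theorem:
`x F̄(x) U((x,x+h]) → α h ∫₀^∞ t^{-α} g(t) dt`. -/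
def SRTholds (F : Measure ℝ) (h α : ℝ) (g : ℝ → ℝ) : Prop :=
  Tendsto (fun x : ℝ => x * rtail F x * ((renewal F) (Set.Ioc x (x + h))).toReal)
    atTop (nhds (α * h * ∫ t in Set.Ioi (0:ℝ), t ^ (-α) * g t))

variable {Ω : Type*} [MeasurableSpace Ω]

/-- Partial sums `Sₙ = X₁ + ⋯ + Xₙ`. -/
def pSum (X : ℕ → Ω → ℝ) (n : ℕ) (ω : Ω) : ℝ := ∑ i ∈ Finset.range n, X i ω

/-- `X` is an i.i.d. sequence with common law `F` under `P`. -/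
def IIDseq (P : Measure Ω) (F : Measure ℝ) (X : ℕ → Ω → ℝ) : Prop :=
  (∀ i, Measurable (X i)) ∧ (∀ i, P.map (X i) = F) ∧
    ProbabilityTheory.iIndepFun X P

/-- `Nₙ = #{i ≤ n : Xᵢ > 0}`. -/
def Ncount (X : ℕ → Ω → ℝ) (n : ℕ) (ω : Ω) : ℕ :=
  ((Finset.range n).filter fun i => 0 < X i ω).card

/-- `Sₙ⁻ = ∑_{i ≤ n} Xᵢ⁻`. -/
def sMinus (X : ℕ → Ω → ℝ) (n : ℕ) (ω : Ω) : ℝ :=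
  ∑ i ∈ Finset.range n, max (-(X i ω)) 0

/-- The quantity `R_{T,η,r,c₁,c₂}(x,δ)` of Theorem `t:sum-small-n`, with
`xₙ = x + Sₙ⁻` and `κ = ⌊1/α⌋`. -/
def Rquant (F : Measure ℝ) (ℓ : ℝ → ℝ) (h α : ℝ) (P : Measure Ω) (X : ℕ → Ω → ℝ)
    (L : ℝ → ℝ) (T η r c₁ c₂ x δ : ℝ) : ℝ :=
  (x / ℓ x) * ∑ n ∈ Finset.Ico ⌈L x⌉₊ ⌈ℓ (δ * x)⌉₊,
    ∫ ω, ((Ncount X n ω : ℝ) / linv ℓ ((Ncount X n ω : ℕ) : ℝ)) *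
        (rtail F (x + sMinus X n ω) / (x + sMinus X n ω)) *
        sSup ((fun t => IofHat F ℓ h η (Ncount X n ω) r t T) ''
          Set.Icc (c₁ * (x + sMinus X n ω) / (⌊1/α⌋₊ : ℝ))
            (c₂ * (x + sMinus X n ω) + 2 * h)) ∂P

/-- Strict ascending ladder epochs. -/
def ladderTime (X : ℕ → Ω → ℝ) : ℕ → Ω → ℕ
  | 0 => fun _ => 0
  | k + 1 => fun ω =>
      sInf {n : ℕ | ladderTime X k ω < n ∧ pSum X (ladderTime X k ω) ω < pSum X n ω}

/-- Strict ascending ladder heights `H_k`. -/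
def ladderHeight (X : ℕ → Ω → ℝ) (k : ℕ) (ω : Ω) : ℝ := pSum X (ladderTime X k ω) ω

/-- Weak descending ladder epochs (weak ascending epochs of `-S`). -/
def wLadderTimeDesc (X : ℕ → Ω → ℝ) : ℕ → Ω → ℕ
  | 0 => fun _ => 0
  | k + 1 => fun ω =>
      sInf {n : ℕ | wLadderTimeDesc X k ω < n ∧
        pSum X n ω ≤ pSum X (wLadderTimeDesc X k ω) ω}

/-- Weak descending ladder heights (ladder heights of the walk `-S`). -/
def wLadderHeightDesc (X : ℕ → Ω → ℝ) (k : ℕ) (ω : Ω) : ℝ :=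
  - pSum X (wLadderTimeDesc X k ω) ω

/-- `X_{n:k}`, the `k`-th largest among `X₁,…,Xₙ`; by convention `0` if `k > n`. -/
def ordStat (X : ℕ → Ω → ℝ) (n k : ℕ) (ω : Ω) : ℝ :=
  sSup {t : ℝ | k ≤ ((Finset.range n).filter fun i => t ≤ X i ω).card}

/-- `S_{n:k} = X_{n:1} + ⋯ + X_{n:k}`. -/
def topSum (X : ℕ → Ω → ℝ) (n k : ℕ) (ω : Ω) : ℝ :=
  ∑ j ∈ Finset.Icc 1 k, ordStat X n j ω

/-- `ζ_{n,x} = aₙ^{1-γ} x^γ`. -/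
def zetaCut (ℓ : ℝ → ℝ) (γ : ℝ) (n : ℕ) (x : ℝ) : ℝ :=
  (linv ℓ (n : ℝ)) ^ (1 - γ) * x ^ γ

/-- The event `E_{n,k,x} = {Sₙ ∈ (x,x+h], X_{n:k} > ζ_{n,x} ≥ X_{n:k+1}}`,
with the convention `X_{n:0} = ∞`. -/
def Eevent (X : ℕ → Ω → ℝ) (ℓ : ℝ → ℝ) (h γ : ℝ) (n k : ℕ) (x : ℝ) : Set Ω :=
  {ω | pSum X n ω ∈ Set.Ioc x (x + h) ∧
    (k = 0 ∨ zetaCut ℓ γ n x < ordStat X n k ω) ∧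
    ordStat X n (k + 1) ω ≤ zetaCut ℓ γ n x}

end SRT

open SRT

/-
If `Sₙ ∈ (t, t + h]`, some step exceeds `t / n`, and given the other steps it falls into a window
of length `h` to the right of `t / n - h`. By the hypothesis on `ω`, a window of length `h` at `s`
has mass `O(1 / f(s))`, where `f = M / F̄` is monotone and regularly varying of exponent `α + β`,
so Potter's bound gives `F^{*n}((t, t + h]) ≤ C n^{1 + γ} / f(t)` for `t ≥ n X` and any
`γ > α + β`. Summing over `n < L(x)` gives `O(L(x)^{2 + γ} / f(x))`. As `x / (ℓ f) ∼ g₀⁻²`, the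
quantity in question is `O(g₀^{ε(2 + γ) - 2})`, and this exponent is negative for `γ` close to
`α + β` because `ε < 2 / (2 + α + β)`.
-/

namespace SRT

section Asymptotics

lemma isLittleO_rpow_rpow_atTop {a b : ℝ} (hab : a < b) :
    (fun x : ℝ => x ^ a) =o[atTop] fun x => x ^ b := by
  refine isLittleO_of_tendsto' ?_ ((tendsto_rpow_neg_atTop (sub_pos.2 hab)).congr' ?_) <;>
    filter_upwards [eventually_gt_atTop 0] with x hx
  · exact fun h => absurd h (Real.rpow_pos_of_pos hx b).ne'
  · rw [neg_sub, Real.rpow_sub hx]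

lemma isBigO_natCeil {ι : Type*} {l : Filter ι} {u v : ι → ℝ} (huv : u =O[l] v)
    (hv : Tendsto v l atTop) : (fun x => (⌈u x⌉₊ : ℝ)) =O[l] v := by
  have h_ceil : (fun x => (⌈u x⌉₊ : ℝ)) =O[l] fun x => |u x| + 1 := by
    refine isBigO_of_le l fun x => ?_
    rw [Real.norm_natCast, Real.norm_of_nonneg (by positivity)]
    exact (Nat.cast_le.2 (Nat.ceil_le_ceil (le_abs_self _))).trans
      (Nat.ceil_lt_add_one (abs_nonneg _)).le
  exact h_ceil.trans (huv.norm_left.add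
    ((isLittleO_const_left.2 (.inr (tendsto_norm_atTop_atTop.comp hv))).isBigO))

end Asymptotics

section Convolution

variable {μ ν F : Measure ℝ}

lemma mconv_eq_conv (μ ν : Measure ℝ) [SFinite ν] : mconv μ ν = μ ∗ ν := by
  have h_map : Measurable fun x : ℝ => ν.map fun y => x + y := by
    refine Measure.measurable_of_measurable_coe _ fun s hs => ?_
    simp_rw [Measure.map_apply (measurable_const_add _) hs]
    exact measurable_measure_prodMk_left (measurable_add hs)
  refine Measure.ext_of_lintegral _ fun f hf => ?_
  rw [mconv, Measure.lintegral_bind h_map.aemeasurable hf.aemeasurable, Measure.lintegral_conv hf]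
  simp_rw [lintegral_map hf (measurable_const_add _)]

lemma convPow_succ (F : Measure ℝ) [SFinite F] (n : ℕ) : convPow F (n + 1) = convPow F n ∗ F :=
  mconv_eq_conv _ _

instance isProbabilityMeasure_convPow (F : Measure ℝ) [IsProbabilityMeasure F] (n : ℕ) :
    IsProbabilityMeasure (convPow F n) := by
  induction n with
  | zero => exact Measure.dirac.isProbabilityMeasure
  | succ n ih => rw [convPow_succ]; infer_instance

lemma conv_Ioc_le [IsProbabilityMeasure μ] [IsProbabilityMeasure ν] {a h t : ℝ} {b c : ENNReal}
    (hμ : ∀ s ≥ t - a, μ (Ioc s (s + h)) ≤ b) (hν : ∀ s > a - h, ν (Ioc s (s + h)) ≤ c) :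
    (μ ∗ ν) (Ioc t (t + h)) ≤ b + c := by
  set A : Set (ℝ × ℝ) := (fun p => p.1 + p.2) ⁻¹' Ioc t (t + h)
  have hA : MeasurableSet A := measurable_add measurableSet_Ioc
  have hB : MeasurableSet {p : ℝ × ℝ | p.2 ≤ a} := measurableSet_le measurable_snd measurable_const
  have small_jump : (μ.prod ν) (A ∩ {p | p.2 ≤ a}) ≤ b := by
    rw [Measure.prod_apply_symm (hA.inter hB)]
    refine (lintegral_mono (g := fun _ => b) fun y => ?_).trans (by simp)
    by_cases hy : y ≤ a
    · refine (measure_mono ?_).trans (hμ (t - y) (by linarith))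
      rintro x ⟨⟨_, _⟩, _⟩
      constructor <;> linarith
    · have : (fun x => (x, y)) ⁻¹' (A ∩ {p | p.2 ≤ a}) = ∅ :=
        eq_empty_of_forall_notMem fun _ hx => hy hx.2
      simp [this]
  have large_jump : (μ.prod ν) (A \ {p | p.2 ≤ a}) ≤ c := by
    rw [Measure.prod_apply (hA.diff hB)]
    refine (lintegral_mono (g := fun _ => c) fun x => ?_).trans (by simp)
    by_cases hx : a - h < t - x
    · refine (measure_mono ?_).trans (hν (t - x) hx)
      rintro y ⟨⟨_, _⟩, _⟩
      constructor <;> linarith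
    · have : Prod.mk x ⁻¹' (A \ {p | p.2 ≤ a}) = ∅ := by
        refine eq_empty_of_forall_notMem ?_
        rintro y ⟨⟨_, _⟩, hy⟩
        exact hy (show y ≤ a by linarith)
      simp [this]
  calc (μ ∗ ν) (Ioc t (t + h)) = (μ.prod ν) A := Measure.map_apply measurable_add measurableSet_Ioc
    _ = (μ.prod ν) (A ∩ {p | p.2 ≤ a}) + (μ.prod ν) (A \ {p | p.2 ≤ a}) :=
      (measure_inter_add_sdiff A hB).symm
    _ ≤ b + c := add_le_add small_jump large_jump

lemma convPow_Ioc_le [IsProbabilityMeasure F] {a h : ℝ} {c : ENNReal}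
    (hc : ∀ s > a - h, F (Ioc s (s + h)) ≤ c) (n : ℕ) :
    ∀ t ≥ n * a, convPow F n (Ioc t (t + h)) ≤ n * c := by
  induction n with
  | zero =>
    intro t ht
    rw [Nat.cast_zero, zero_mul] at ht
    simp [convPow, ht.not_gt]
  | succ n ih =>
    intro t ht
    push_cast at ht ⊢
    rw [convPow_succ, add_mul, one_mul]
    exact conv_Ioc_le (a := a) (fun s hs => ih s (by linarith)) hc

end Convolution

section RegularVariation

variable {f g : ℝ → ℝ} {p q γ : ℝ}

lemma RegVary.mul (hf : RegVary f p) (hg : RegVary g q) :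
    RegVary (fun x => f x * g x) (p + q) := by
  refine ⟨fun x hx => mul_pos (hf.1 x hx) (hg.1 x hx), fun c hc => ?_⟩
  rw [Real.rpow_add hc]
  exact ((hf.2 c hc).mul (hg.2 c hc)).congr fun x => div_mul_div_comm _ _ _ _

lemma RegVary.congr_isEquivalent (hf : RegVary f p) (hg : ∀ x > 0, 0 < g x)
    (hfg : f ~[atTop] g) : RegVary g p := by
  refine ⟨hg, fun c hc => ?_⟩
  have h_comp : (fun x => f (c * x)) ~[atTop] fun x => g (c * x) :=
    hfg.comp_tendsto (tendsto_id.const_mul_atTop hc)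
  exact (h_comp.div hfg).tendsto_nhds (hf.2 c hc)

lemma RegVary.isTheta_comp_mul (hf : RegVary f p) {c : ℝ} (hc : 0 < c) :
    (fun x => f (c * x)) =Θ[atTop] f :=
  (isTheta_of_div_tendsto_nhds_ne_zero (hf.2 c hc) (Real.rpow_pos_of_pos hc p).ne').symm

lemma RegVary.exponent_nonneg (hf : RegVary f p) (hmono : MonotoneOn f (Ioi 0)) : 0 ≤ p := by
  have h_one_le : (1 : ℝ) ≤ 2 ^ p := by
    refine ge_of_tendsto (hf.2 2 two_pos) ?_
    filter_upwards [eventually_gt_atTop 0] with x hx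
    have h2x : 0 < 2 * x := by positivity
    exact (one_le_div (hf.1 x hx)).2 (hmono hx h2x (by linarith))
  contrapose! h_one_le
  exact Real.rpow_lt_one_of_one_lt_of_neg one_lt_two h_one_le

/- Monotonicity interpolates the doubling estimate between powers of two, which replaces the
uniform convergence theorem in the usual proof of Potter's bound. -/
lemma RegVary.exists_potter_bound (hf : RegVary f p) (hmono : MonotoneOn f (Ioi 0))
    (hγ : p < γ) : ∃ X > 0, ∀ y ≥ X, ∀ r ≥ (1 : ℝ), f (r * y) ≤ (2 * r) ^ γ * f y := by
  have hγ0 : 0 ≤ γ := (hf.exponent_nonneg hmono).trans hγ.le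
  obtain ⟨X₀, hX₀⟩ := eventually_atTop.1
    ((hf.2 2 two_pos).eventually_lt_const (Real.rpow_lt_rpow_of_exponent_lt one_lt_two hγ))
  refine ⟨max X₀ 1, by positivity, fun y hy r hr => ?_⟩
  have hy0 : 0 < y := by linarith [le_max_right X₀ 1]
  have hfy := hf.1 y hy0
  have dyadic (k : ℕ) : f (2 ^ k * y) ≤ ((2 : ℝ) ^ k) ^ γ * f y := by
    induction k with
    | zero => simp
    | succ k ih =>
      have hk : y ≤ 2 ^ k * y := le_mul_of_one_le_left hy0.le (one_le_pow₀ one_le_two)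
      have doubling := hX₀ (2 ^ k * y) (by linarith [le_max_left X₀ 1])
      rw [div_lt_iff₀ (hf.1 _ (by positivity))] at doubling
      calc f (2 ^ (k + 1) * y) = f (2 * (2 ^ k * y)) := by ring_nf
        _ ≤ 2 ^ γ * f (2 ^ k * y) := doubling.le
        _ ≤ 2 ^ γ * (((2 : ℝ) ^ k) ^ γ * f y) := by gcongr
        _ = ((2 : ℝ) ^ (k + 1)) ^ γ * f y := by
          rw [pow_succ, Real.mul_rpow (by positivity) (by positivity)]; ring
  obtain ⟨k, hk, hk_succ⟩ := exists_nat_pow_near hr one_lt_two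
  calc f (r * y) ≤ f (2 ^ (k + 1) * y) :=
        hmono (mem_Ioi.2 (by positivity)) (mem_Ioi.2 (by positivity)) (by gcongr)
    _ ≤ ((2 : ℝ) ^ (k + 1)) ^ γ * f y := dyadic _
    _ ≤ (2 * r) ^ γ * f y := by
        gcongr
        rw [pow_succ]
        linarith

lemma RegVary.isBigO_rpow (hf : RegVary f p) (hmono : MonotoneOn f (Ioi 0)) (hγ : p < γ) :
    f =O[atTop] fun x => x ^ γ := by
  obtain ⟨X, hX, potter⟩ := hf.exists_potter_bound hmono hγ
  refine IsBigO.of_bound ((2 / X) ^ γ * f X) ?_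
  filter_upwards [eventually_ge_atTop X] with x hx
  have hx0 : 0 < x := hX.trans_le hx
  rw [Real.norm_of_nonneg (hf.1 x hx0).le, Real.norm_of_nonneg (by positivity)]
  calc f x = f (x / X * X) := by rw [div_mul_cancel₀ _ hX.ne']
    _ ≤ (2 * (x / X)) ^ γ * f X := potter X le_rfl _ ((one_le_div hX).2 hx)
    _ = (2 / X) ^ γ * f X * x ^ γ := by
      rw [← mul_div_assoc, mul_div_right_comm, Real.mul_rpow (by positivity) hx0.le,
        mul_right_comm]

end RegularVariation

section RightTail

variable {F : Measure ℝ} {ℓ M : ℝ → ℝ} {α h : ℝ}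

lemma RightTail.isEquivalent_inv_rtail (hRT : RightTail F ℓ) :
    ℓ ~[atTop] fun x => (rtail F x)⁻¹ :=
  isEquivalent_of_tendsto_one (hRT.congr fun x => by rw [Pi.div_apply, div_inv_eq_mul, mul_comm])

variable [IsFiniteMeasure F]

lemma rtail_antitone (F : Measure ℝ) [IsFiniteMeasure F] : Antitone (rtail F) :=
  fun _ _ hxy => measureReal_mono (Ioi_subset_Ioi hxy)

lemma RightTail.rtail_pos (hRT : RightTail F ℓ) (x : ℝ) : 0 < rtail F x := by
  obtain ⟨y, hy, hxy⟩ :=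
    ((hRT.eventually_const_lt zero_lt_one).and (eventually_ge_atTop x)).exists
  have hy_ne : rtail F y ≠ 0 := left_ne_zero_of_mul hy.ne'
  exact (hy_ne.symm.lt_of_le ENNReal.toReal_nonneg).trans_le (rtail_antitone F hxy)

lemma RightTail.monotone_inv_rtail (hRT : RightTail F ℓ) : Monotone fun x => (rtail F x)⁻¹ :=
  fun _ y hxy => inv_anti₀ (hRT.rtail_pos y) (rtail_antitone F hxy)

lemma RightTail.regVary_inv_rtail (hRT : RightTail F ℓ) (hℓ : RegVary ℓ α) :
    RegVary (fun x => (rtail F x)⁻¹) α :=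
  hℓ.congr_isEquivalent (fun x _ => inv_pos.2 (hRT.rtail_pos x)) hRT.isEquivalent_inv_rtail

lemma RightTail.isBigO_Ioc (hRT : RightTail F ℓ)
    (hω : omegaFn F h =O[atTop] fun x => x / M x) :
    (fun s => (F (Ioc s (s + h))).toReal) =O[atTop] fun s => (M s * (rtail F s)⁻¹)⁻¹ := by
  refine (hω.mul (isBigO_refl (fun s => rtail F s / s) atTop)).congr' ?_ ?_ <;>
    filter_upwards [eventually_ne_atTop 0] with s hs
  · have := hRT.rtail_pos s
    simp only [omegaFn]
    field_simp
  · rw [mul_inv, inv_inv, div_mul_div_comm, mul_comm s, mul_div_mul_right _ _ hs, inv_mul_eq_div]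

end RightTail

section OneBigJump

/-- `sup_{t ≥ u} F^{*n}((t, t + h])`, the summand of the cut-off estimate. -/
def supWindow (F : Measure ℝ) (h : ℝ) (n : ℕ) (u : ℝ) : ℝ :=
  sSup ((fun t => (convPow F n (Ioc t (t + h))).toReal) '' Ici u)

lemma supWindow_nonneg (F : Measure ℝ) (h : ℝ) (n : ℕ) (u : ℝ) : 0 ≤ supWindow F h n u :=
  Real.sSup_nonneg (forall_mem_image.2 fun _ _ => ENNReal.toReal_nonneg)

variable {F : Measure ℝ} {f : ℝ → ℝ} {p γ h : ℝ}

lemma RegVary.exists_Ioc_le [IsFiniteMeasure F] (hf : RegVary f p) (hmono : MonotoneOn f (Ioi 0))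
    (hF : (fun s => (F (Ioc s (s + h))).toReal) =O[atTop] fun s => (f s)⁻¹) (hγ : p < γ) :
    ∃ C > (0 : ℝ), ∃ X > (0 : ℝ), ∀ a ≥ X, ∀ r ≥ (1 : ℝ), ∀ s > a - h,
      (F (Ioc s (s + h))).toReal ≤ C * r ^ γ / f (r * a) := by
  obtain ⟨C, hC, hFC⟩ := hF.exists_pos
  obtain ⟨X₁, hX₁⟩ := eventually_atTop.1 hFC.bound
  obtain ⟨X₂, hX₂, potter⟩ := hf.exists_potter_bound hmono hγ
  refine ⟨C * 4 ^ γ, by positivity, 2 * max (max X₁ X₂) h, by positivity,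
    fun a ha r hr s hs => ?_⟩
  obtain ⟨⟨hX₁a, hX₂a⟩, hha⟩ : (X₁ ≤ a / 2 ∧ X₂ ≤ a / 2) ∧ h ≤ a / 2 := by
    simpa only [max_le_iff] using (le_div_iff₀' two_pos).2 ha
  have ha0 : 0 < a / 2 := hX₂.trans_le hX₂a
  have has : a / 2 ≤ s := by linarith
  have hs0 : 0 < s := ha0.trans_le has
  have hfa := hf.1 _ ha0
  have hfs := hf.1 _ hs0
  have hfra : 0 < f (r * a) := hf.1 _ (mul_pos (by linarith) (by linarith))
  have local_bound := hX₁ s (hX₁a.trans has)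
  rw [Real.norm_of_nonneg ENNReal.toReal_nonneg, Real.norm_of_nonneg (by positivity)]
    at local_bound
  have growth : f (r * a) ≤ 4 ^ γ * r ^ γ * f (a / 2) := by
    rw [← Real.mul_rpow (by norm_num) (by linarith), show r * a = 2 * r * (a / 2) by ring,
      show 4 * r = 2 * (2 * r) by ring]
    exact potter _ hX₂a _ (by linarith)
  calc (F (Ioc s (s + h))).toReal ≤ C * (f s)⁻¹ := local_bound
    _ ≤ C * (f (a / 2))⁻¹ := by gcongr; exact hmono ha0 hs0 has
    _ ≤ C * (4 ^ γ * r ^ γ / f (r * a)) := by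
      gcongr
      rwa [le_div_iff₀ hfra, inv_mul_le_iff₀' hfa]
    _ = C * 4 ^ γ * r ^ γ / f (r * a) := by ring

variable [IsProbabilityMeasure F]

lemma RegVary.exists_convPow_Ioc_le (hf : RegVary f p) (hmono : MonotoneOn f (Ioi 0))
    (hF : (fun s => (F (Ioc s (s + h))).toReal) =O[atTop] fun s => (f s)⁻¹) (hγ : p < γ) :
    ∃ C > (0 : ℝ), ∃ X > (0 : ℝ), ∀ n : ℕ, ∀ t > 0, n * X ≤ t →
      (convPow F n (Ioc t (t + h))).toReal ≤ C * n ^ (1 + γ) / f t := by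
  have hγ0 : 0 ≤ γ := (hf.exponent_nonneg hmono).trans hγ.le
  obtain ⟨C, hC, X, hX, hFX⟩ := hf.exists_Ioc_le hmono hF hγ
  refine ⟨C, hC, X, hX, fun n t ht hnt => ?_⟩
  have hft := hf.1 t ht
  obtain rfl | hn := n.eq_zero_or_pos
  · simpa [convPow, ht.le.not_gt] using by positivity
  have hn0 : (0 : ℝ) < n := by exact_mod_cast hn
  have one_step : ∀ s > t / n - h,
      F (Ioc s (s + h)) ≤ ENNReal.ofReal (C * n ^ γ / f t) := fun s hs => by
    rw [ENNReal.le_ofReal_iff_toReal_le (measure_ne_top _ _) (by positivity)]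
    simpa only [mul_div_cancel₀ _ hn0.ne'] using
      hFX (t / n) ((le_div_iff₀' hn0).2 hnt) n (by exact_mod_cast hn) s hs
  have n_steps := convPow_Ioc_le one_step n t (mul_div_cancel₀ t hn0.ne').le
  rw [← ENNReal.ofReal_natCast, ← ENNReal.ofReal_mul hn0.le,
    ENNReal.le_ofReal_iff_toReal_le (measure_ne_top _ _) (by positivity)] at n_steps
  rw [Real.rpow_one_add' hn0.le (by positivity)]
  exact n_steps.trans_eq (by ring)

lemma RegVary.isBigO_sum_supWindow (hf : RegVary f p) (hmono : MonotoneOn f (Ioi 0))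
    (hF : (fun s => (F (Ioc s (s + h))).toReal) =O[atTop] fun s => (f s)⁻¹) (hγ : p < γ)
    {θ : ℝ} (hθ : 0 < θ) {N : ℝ → ℕ} (hN : (fun x => (N x : ℝ)) =o[atTop] fun x => x) :
    (fun x => ∑ n ∈ Finset.range (N x), supWindow F h n (θ * x)) =O[atTop]
      fun x => (N x : ℝ) ^ (2 + γ) / f x := by
  have hγ0 : 0 ≤ γ := (hf.exponent_nonneg hmono).trans hγ.le
  obtain ⟨C, hC, X, hX, hFX⟩ := hf.exists_convPow_Ioc_le hmono hF hγ
  suffices (fun x => ∑ n ∈ Finset.range (N x), supWindow F h n (θ * x)) =O[atTop]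
      fun x => (N x : ℝ) ^ (2 + γ) / f (θ * x) from
    this.trans_isTheta ((isTheta_refl _ _).div (hf.isTheta_comp_mul hθ))
  refine IsBigO.of_bound C ?_
  filter_upwards [hN.bound (div_pos hθ hX), eventually_gt_atTop 0] with x hNx hx
  have hθx : 0 < θ * x := by positivity
  have hfθx := hf.1 _ hθx
  rw [Real.norm_natCast, Real.norm_of_nonneg hx.le, div_mul_eq_mul_div, le_div_iff₀ hX] at hNx
  have term_le : ∀ n ∈ Finset.range (N x),
      supWindow F h n (θ * x) ≤ C * N x ^ (1 + γ) / f (θ * x) := fun n hn => by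
    have hnN : (n : ℝ) ≤ N x := by exact_mod_cast (Finset.mem_range.1 hn).le
    refine csSup_le (nonempty_Ici.image _) (forall_mem_image.2 fun t (ht : θ * x ≤ t) => ?_)
    refine (hFX n t (hθx.trans_le ht) (((mul_le_mul_of_nonneg_right hnN hX.le).trans hNx).trans
      ht)).trans ?_
    gcongr
    exact hmono hθx (hθx.trans_le ht) ht
  rw [Real.norm_of_nonneg (Finset.sum_nonneg fun n _ => supWindow_nonneg F h n _),
    Real.norm_of_nonneg (by positivity)]
  calc ∑ n ∈ Finset.range (N x), supWindow F h n (θ * x)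
      ≤ N x * (C * N x ^ (1 + γ) / f (θ * x)) := by
        simpa using Finset.sum_le_card_nsmul _ _ _ term_le
    _ = C * (N x ^ (2 + γ) / f (θ * x)) := by
      rw [show 2 + γ = 1 + (1 + γ) by ring,
        Real.rpow_one_add' (y := 1 + γ) (Nat.cast_nonneg _) (by positivity)]
      ring

end OneBigJump

section CutoffScale

variable {F : Measure ℝ} {ℓ M : ℝ → ℝ} {α β γ ε θ h : ℝ}

/-- The scale `g₀(x) = ℓ(x) √(M(x) / x)`, whose powers bound the cut-off `L`. -/
def cutoffScale (ℓ M : ℝ → ℝ) (x : ℝ) : ℝ := ℓ x * √(M x / x)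

lemma cutoffScale_pos (hℓ : RegVary ℓ α) (hM : RegVary M β) {x : ℝ} (hx : 0 < x) :
    0 < cutoffScale ℓ M x :=
  mul_pos (hℓ.1 x hx) (Real.sqrt_pos.2 (div_pos (hM.1 x hx) hx))

lemma cutoffScale_sq (hM : RegVary M β) (ℓ : ℝ → ℝ) {x : ℝ} (hx : 0 < x) :
    cutoffScale ℓ M x ^ 2 = ℓ x ^ 2 * (M x / x) := by
  rw [cutoffScale, mul_pow, Real.sq_sqrt (div_pos (hM.1 x hx) hx).le]

lemma tendsto_cutoffScale_atTop (hℓ : RegVary ℓ α) (hM : RegVary M β)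
    (hMo : (fun x => x / M x) =o[atTop] fun x => ℓ x ^ 2) :
    Tendsto (cutoffScale ℓ M) atTop atTop := by
  have h_inv : Tendsto (fun x => x / M x / ℓ x ^ 2) atTop (nhdsWithin 0 (Ioi 0)) := by
    refine tendsto_nhdsWithin_iff.2 ⟨hMo.tendsto_div_nhds_zero, ?_⟩
    filter_upwards [eventually_gt_atTop 0] with x hx
    have := hℓ.1 x hx
    have := hM.1 x hx
    exact mem_Ioi.2 (by positivity)
  refine (Real.tendsto_sqrt_atTop.comp h_inv.inv_tendsto_nhdsGT_zero).congr' ?_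
  filter_upwards [eventually_gt_atTop 0] with x hx
  rw [Function.comp_apply, Pi.inv_apply, inv_div, ← mul_one_div, one_div_div,
    ← cutoffScale_sq hM ℓ hx, Real.sqrt_sq (cutoffScale_pos hℓ hM hx).le]

lemma isBigO_cutoffScale {a b : ℝ} (hℓ : ℓ =O[atTop] fun x => x ^ a)
    (hM : M =O[atTop] fun x => x ^ b) :
    cutoffScale ℓ M =O[atTop] fun x => x ^ (a + (b - 1) / 2) := by
  have h_pos : ∀ᶠ x : ℝ in atTop, 0 < x := eventually_gt_atTop 0
  have h_sqrt : (fun x => √(M x / x)) =O[atTop] fun x => (x ^ b / x) ^ (1 / 2 : ℝ) := by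
    simp_rw [Real.sqrt_eq_rpow]
    refine IsBigO.rpow (by norm_num) ?_ (hM.mul (isBigO_refl (fun x => x⁻¹) _))
    filter_upwards [h_pos] with x hx using by positivity
  refine (hℓ.mul h_sqrt).congr' .rfl ?_
  filter_upwards [h_pos] with x hx
  rw [← Real.rpow_sub_one hx.ne', ← Real.rpow_mul hx.le, ← Real.rpow_add hx]
  ring_nf

lemma isLittleO_cutoffScale_rpow [IsFiniteMeasure F] (hℓ : RegVary ℓ α) (hRT : RightTail F ℓ)
    (hM : RegVary M β) (hMmono : MonotoneOn M (Ioi 0)) (hε0 : 0 < ε)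
    (hε : ε * (2 * α + β - 1) < 2) :
    (fun x => cutoffScale ℓ M x ^ ε) =o[atTop] fun x => x := by
  obtain ⟨c, hc, hcε⟩ := exists_between ((lt_div_iff₀' hε0).2 hε)
  obtain ⟨δ, hδ, rfl⟩ : ∃ δ > 0, c = 2 * (α + δ) + (β + δ) - 1 :=
    ⟨(c - (2 * α + β - 1)) / 3, by linarith, by ring⟩
  have hℓ_growth : ℓ =O[atTop] fun x => x ^ (α + δ) :=
    hRT.isEquivalent_inv_rtail.isBigO.trans <|
      (hRT.regVary_inv_rtail hℓ).isBigO_rpow (hRT.monotone_inv_rtail.monotoneOn _) (by linarith)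
  have hM_growth : M =O[atTop] fun x => x ^ (β + δ) := hM.isBigO_rpow hMmono (by linarith)
  have h_nonneg : ∀ᶠ x : ℝ in atTop, 0 ≤ x ^ (α + δ + (β + δ - 1) / 2) := by
    filter_upwards [eventually_ge_atTop 0] with x hx using by positivity
  refine ((isBigO_cutoffScale hℓ_growth hM_growth).rpow hε0.le h_nonneg).trans_isLittleO ?_
  rw [lt_div_iff₀' hε0] at hcε
  refine ((isLittleO_rpow_rpow_atTop (a := (α + δ + (β + δ - 1) / 2) * ε) (b := 1)
    (by linarith)).congr' ?_ ?_) <;> filter_upwards [eventually_ge_atTop 0] with x hx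
  · rw [Real.rpow_mul hx]
  · rw [Real.rpow_one]

lemma RightTail.isEquivalent_inv_cutoffScale_sq [IsFiniteMeasure F] (hRT : RightTail F ℓ)
    (hM : RegVary M β) :
    (fun x => x / ℓ x * (M x * (rtail F x)⁻¹)⁻¹) ~[atTop]
      fun x => (cutoffScale ℓ M x ^ 2)⁻¹ := by
  have h_equiv : (fun x => x / ℓ x * (M x * (rtail F x)⁻¹)⁻¹) ~[atTop]
      fun x => x / ℓ x * (M x * ℓ x)⁻¹ :=
    IsEquivalent.refl.mul (IsEquivalent.refl.mul hRT.isEquivalent_inv_rtail.symm).inv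
  refine h_equiv.congr_right ?_
  filter_upwards [eventually_gt_atTop 0] with x hx
  have := hM.1 x hx
  rw [cutoffScale_sq hM ℓ hx]
  field_simp

lemma RightTail.isBigO_sum_supWindow [IsProbabilityMeasure F] (hRT : RightTail F ℓ)
    (hℓ : RegVary ℓ α) (hM : RegVary M β) (hMmono : MonotoneOn M (Ioi 0))
    (hω : omegaFn F h =O[atTop] fun x => x / M x) (hγ : α + β < γ) (hθ : 0 < θ)
    {N : ℝ → ℕ} (hN : (fun x => (N x : ℝ)) =o[atTop] fun x => x) :
    (fun x => x / ℓ x * ∑ n ∈ Finset.range (N x), supWindow F h n (θ * x)) =O[atTop]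
      fun x => (N x : ℝ) ^ (2 + γ) * (cutoffScale ℓ M x ^ 2)⁻¹ := by
  have h_inv := hRT.regVary_inv_rtail hℓ
  have h_mono : MonotoneOn (fun x => M x * (rtail F x)⁻¹) (Ioi 0) :=
    hMmono.mul (hRT.monotone_inv_rtail.monotoneOn _) (fun x hx => (hM.1 x hx).le)
      fun x hx => (h_inv.1 x hx).le
  have h_sum := (hM.mul h_inv).isBigO_sum_supWindow h_mono (hRT.isBigO_Ioc hω)
    (by rwa [add_comm]) hθ hN
  refine ((isBigO_refl (fun x => x / ℓ x) _).mul h_sum).trans ?_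
  refine ((isBigO_refl (fun x => (N x : ℝ) ^ (2 + γ)) _).mul
    (hRT.isEquivalent_inv_cutoffScale_sq hM).isBigO).congr_left fun x => ?_
  rw [div_eq_mul_inv (_ ^ _), mul_left_comm]

end CutoffScale

end SRT

theorem L_prior_two_general {F : Measure ℝ} [IsProbabilityMeasure F] {α β h : ℝ} {ℓ M : ℝ → ℝ}
    (hα : α < 3) (hℓ : RegVary ℓ α) (hRT : RightTail F ℓ)
    (hMmono : MonotoneOn M (Ioi 0)) (hMreg : RegVary M β)
    (hω : omegaFn F h =O[atTop] fun x => x / M x)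
    (hMo : (fun x => x / M x) =o[atTop] fun x => ℓ x ^ 2)
    {ε θ : ℝ} (hε0 : 0 < ε) (hε : ε < 2 / (2 + α + β)) (hθ : 0 < θ)
    {L : ℝ → ℝ} (hL : L =O[atTop] fun x => cutoffScale ℓ M x ^ ε) :
    Tendsto (fun x => x / ℓ x * ∑ n ∈ Finset.range ⌈L x⌉₊, supWindow F h n (θ * x))
      atTop (nhds 0) := by
  set g := cutoffScale ℓ M
  have hαβ : 0 ≤ α + β := add_nonneg
    ((hRT.regVary_inv_rtail hℓ).exponent_nonneg (hRT.monotone_inv_rtail.monotoneOn _))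
    (hMreg.exponent_nonneg hMmono)
  rw [lt_div_iff₀ (by linarith)] at hε
  obtain ⟨γ, hγ, hγε⟩ : ∃ γ, α + β < γ ∧ γ < 2 / ε - 2 :=
    exists_between (by rw [lt_sub_iff_add_lt', lt_div_iff₀' hε0]; linarith)
  rw [lt_sub_iff_add_lt', lt_div_iff₀' hε0] at hγε
  have hg_top : Tendsto g atTop atTop := tendsto_cutoffScale_atTop hℓ hMreg hMo
  have hN : (fun x => (⌈L x⌉₊ : ℝ)) =O[atTop] fun x => g x ^ ε :=
    isBigO_natCeil hL ((tendsto_rpow_atTop hε0).comp hg_top)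
  -- `α < 3` means `2 * α + β - 1 < 2 + α + β`.
  have hN_lt : (fun x => (⌈L x⌉₊ : ℝ)) =o[atTop] fun x => x :=
    hN.trans_isLittleO (isLittleO_cutoffScale_rpow hℓ hRT hMreg hMmono hε0 (by nlinarith))
  have hN_pow : (fun x => (⌈L x⌉₊ : ℝ) ^ (2 + γ)) =O[atTop] fun x => (g x ^ ε) ^ (2 + γ) :=
    hN.rpow (by linarith) <| by
      filter_upwards [hg_top.eventually_ge_atTop 0] with x hx using Real.rpow_nonneg hx ε
  have h_decay : Tendsto (fun x => (g x ^ ε) ^ (2 + γ) * (g x ^ 2)⁻¹) atTop (nhds 0) := by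
    refine ((tendsto_rpow_neg_atTop (sub_pos.2 hγε)).comp hg_top).congr' ?_
    filter_upwards [hg_top.eventually_gt_atTop 0] with x hx
    rw [Function.comp_apply, neg_sub, Real.rpow_sub hx, Real.rpow_mul hx.le, Real.rpow_two,
      div_eq_mul_inv]
  exact ((hRT.isBigO_sum_supWindow hℓ hMreg hMmono hω hγ hθ hN_lt).trans
    (hN_pow.mul (isBigO_refl _ _))).trans_tendsto h_decay

/-- Proposition 1.4, part 2: a priori lower bound on the
cut-off `L`, general case. -/
theorem L_prior_two
    (F : Measure ℝ) [IsProbabilityMeasure F] (α h : ℝ) (ℓ : ℝ → ℝ)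
    (hα : α ∈ Set.Ioc (0:ℝ) (1/2)) (hℓ : RegVary ℓ α)
    (hRT : RightTail F ℓ) (hspan : SpanOK F h)
    (β : ℝ) (hβ : 1 - 2 * α ≤ β ∧ β ≤ 1)
    (M : ℝ → ℝ) (hMmono : MonotoneOn M (Set.Ioi 0)) (hMreg : RegVary M β)
    (hω : (fun x => omegaFn F h x) =O[atTop] fun x => x / M x)
    (hMo : (fun x => x / M x) =o[atTop] fun x => ℓ x ^ 2) :
    ∀ ε : ℝ, 0 < ε → ε < 1 / (1 + α + β) →
    ∀ θ > (0:ℝ), ∀ L : ℝ → ℝ, MonotoneOn L (Set.Ioi 0) → RegVaryAny L →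
      Tendsto L atTop atTop →
      ((fun x => L x) =O[atTop] fun x => (ℓ x * Real.sqrt (M x / x)) ^ ε) →
      Tendsto (fun x => (x / ℓ x) * ∑ n ∈ Finset.range ⌈L x⌉₊,
          sSup ((fun t => ((convPow F n) (Set.Ioc t (t + h))).toReal) ''
            Set.Ici (θ * x)))
        atTop (nhds 0) := by
  intro ε hε0 hε θ hθ L _ _ _ hL
  exact L_prior_two_general (by linarith [hα.2]) hℓ hRT hMmono hMreg hω hMo hε0
    (hε.trans_le (by rw [div_le_div_iff₀] <;> linarith [hα.1, hα.2, hβ.1])) hθ hL
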